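/- arXiv:1412.0684 — 2 statements merged into one kernel-verified Lean document; each statement's English description precedes it below -/
import Mathlib

section
/- Let G and G' be two finite weighted graphs on the same vertex set V, with weight functions w and w' and state matrices 𝓛(w) and 𝓛(w') respectively. Fix vertices v, r and a neighbor v_s of v. Suppose that (i) v has the same neighbor set N(v) in G and in G', (ii) w(v,j) = w'(v,j) for every j ∈ N(v) (in particular for j = v_s), and (iii) [𝓛(w)^i]_{m,r} = [𝓛(w')^i]_{m,r} for every integer i ≥ 1 and every vertex m ∈ {v} ∪ (N(v) \ {v_s}). Then [𝓛(w)^i]_{v_s,r} = [𝓛(w')^i]_{v_s,r} for every integer i ≥ 1. -/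
/-!
Row `v` of the state matrix is the same for both graphs, because it depends only on the weights at
`v`. Expand `[𝓛 ^ (i + 1)]_{v,r} = ∑ m, [𝓛]_{v,m} [𝓛 ^ i]_{m,r}` along that row. The left-hand sides
agree for the two graphs, as do all terms with `m ≠ vs`: either `m` is `v` or another neighbor
of `v`, or the coefficient `[𝓛]_{v,m}` vanishes. Hence the terms with `m = vs` agree, and their
common coefficient `w(v, vs) ≠ 0` can be cancelled.
-/

open Finset

/-- A weight function for the simple graph `G`: symmetric, positive exactly on
adjacent pairs, zero otherwise (and zero on the diagonal). -/
def IsWeightFn {V : Type*} (G : SimpleGraph V) (w : V → V → ℝ) : Prop :=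
  (∀ u v, w u v = w v u) ∧
  (∀ u v, G.Adj u v → 0 < w u v) ∧
  (∀ u v, u ≠ v → ¬ G.Adj u v → w u v = 0) ∧
  (∀ v, w v v = 0)

/-- The state matrix `𝓛(w)` (the negative of the weighted Laplacian):
`[𝓛(w)]_{u,v} = w(u,v)` for `u ≠ v`, and `[𝓛(w)]_{v,v} = -∑_{u ≠ v} w(v,u)`. -/
def stateMatrix {V : Type*} [Fintype V] [DecidableEq V] (w : V → V → ℝ) :
    Matrix V V ℝ :=
  Matrix.of fun u v => if u = v then -(∑ x ∈ Finset.univ.erase v, w v x) else w u v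

section LinearAlgebra

variable {ι R : Type*} [Fintype ι]

lemma eq_of_dotProduct_eq_of_forall_ne [NonUnitalNonAssocSemiring R] [IsLeftCancelMulZero R]
    [IsRightCancelAdd R] {a x y : ι → R} {j : ι} (hj : a j ≠ 0) (hdot : a ⬝ᵥ x = a ⬝ᵥ y)
    (hxy : ∀ m ≠ j, a m ≠ 0 → x m = y m) : x j = y j := by
  classical
  have hrest : ∑ m ∈ univ.erase j, a m * x m = ∑ m ∈ univ.erase j, a m * y m := by
    refine sum_congr rfl fun m hm => ?_
    by_cases ham : a m = 0
    · rw [ham, zero_mul, zero_mul]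
    · rw [hxy m (ne_of_mem_erase hm) ham]
  rw [dotProduct, dotProduct, ← add_sum_erase _ _ (mem_univ j), ← add_sum_erase _ _ (mem_univ j),
    hrest] at hdot
  exact mul_left_cancel₀ hj (add_right_cancel hdot)

lemma pow_apply_eq_of_row_eq [DecidableEq ι] [Semiring R] [IsLeftCancelMulZero R]
    [IsRightCancelAdd R] {A B : Matrix ι ι R} {v r j : ι} {i : ℕ}
    (hrow : A v = B v) (hj : A v j ≠ 0)
    (hsucc : (A ^ (i + 1)) v r = (B ^ (i + 1)) v r)
    (hpow : ∀ m ≠ j, A v m ≠ 0 → (A ^ i) m r = (B ^ i) m r) :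
    (A ^ i) j r = (B ^ i) j r := by
  refine eq_of_dotProduct_eq_of_forall_ne (x := fun m => (A ^ i) m r)
    (y := fun m => (B ^ i) m r) hj ?_ hpow
  calc A v ⬝ᵥ (fun m => (A ^ i) m r) = (A ^ (i + 1)) v r := by rw [pow_succ', Matrix.mul_apply']
    _ = (B ^ (i + 1)) v r := hsucc
    _ = A v ⬝ᵥ (fun m => (B ^ i) m r) := by rw [pow_succ', Matrix.mul_apply', hrow]

end LinearAlgebra

section StateMatrix

variable {V : Type*} [Fintype V] [DecidableEq V] {w w' : V → V → ℝ} {u v : V}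

lemma stateMatrix_apply_self (w : V → V → ℝ) (v : V) :
    stateMatrix w v v = -∑ x ∈ univ.erase v, w v x :=
  if_pos rfl

lemma stateMatrix_apply_of_ne (w : V → V → ℝ) (h : u ≠ v) : stateMatrix w u v = w u v :=
  if_neg h

lemma stateMatrix_row_congr (h : ∀ u ≠ v, w v u = w' v u) :
    stateMatrix w v = stateMatrix w' v := by
  ext m
  obtain rfl | hm := eq_or_ne v m
  · rw [stateMatrix_apply_self, stateMatrix_apply_self,
      sum_congr rfl fun u hu => h u (ne_of_mem_erase hu)]
  · rw [stateMatrix_apply_of_ne w hm, stateMatrix_apply_of_ne w' hm, h m hm.symm]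

theorem available_node_entries_determined_general {r vs : V} {i : ℕ} (hne : v ≠ vs)
    (hvs : w v vs ≠ 0) (hrow : ∀ u ≠ v, w v u = w' v u)
    (hsucc : (stateMatrix w ^ (i + 1)) v r = (stateMatrix w' ^ (i + 1)) v r)
    (hM : ∀ m, m = v ∨ (w v m ≠ 0 ∧ m ≠ vs) →
      (stateMatrix w ^ i) m r = (stateMatrix w' ^ i) m r) :
    (stateMatrix w ^ i) vs r = (stateMatrix w' ^ i) vs r := by
  refine pow_apply_eq_of_row_eq (stateMatrix_row_congr hrow) ?_ hsucc fun m hmvs hm => hM m ?_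
  · rwa [stateMatrix_apply_of_ne w hne]
  · obtain rfl | hmv := eq_or_ne m v
    · exact Or.inl rfl
    · rw [stateMatrix_apply_of_ne w hmv.symm] at hm
      exact Or.inr ⟨hm, hmvs⟩

end StateMatrix

namespace IsWeightFn

variable {V : Type*} {G G' : SimpleGraph V} {w w' : V → V → ℝ} {u v : V}

lemma pos_of_adj (hw : IsWeightFn G w) (h : G.Adj u v) : 0 < w u v :=
  hw.2.1 u v h

lemma eq_zero_of_not_adj (hw : IsWeightFn G w) (h : ¬ G.Adj u v) : w u v = 0 := by
  obtain ⟨-, -, hzero, hdiag⟩ := hw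
  obtain rfl | huv := eq_or_ne u v
  · exact hdiag u
  · exact hzero u v huv h

lemma adj_of_ne_zero (hw : IsWeightFn G w) (h : w u v ≠ 0) : G.Adj u v :=
  not_imp_comm.1 hw.eq_zero_of_not_adj h

lemma apply_eq_of_forall_adj (hw : IsWeightFn G w) (hw' : IsWeightFn G' w')
    (hN : ∀ u, G'.Adj v u → G.Adj v u) (h : ∀ u, G.Adj v u → w v u = w' v u) (u : V) :
    w v u = w' v u := by
  by_cases hu : G.Adj v u
  · exact h u hu
  · rw [hw.eq_zero_of_not_adj hu, hw'.eq_zero_of_not_adj (mt (hN u) hu)]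

end IsWeightFn

theorem available_node_entries_determined
    {V : Type*} [Fintype V] [DecidableEq V]
    (G G' : SimpleGraph V) [DecidableRel G.Adj] [DecidableRel G'.Adj]
    (w w' : V → V → ℝ) (hw : IsWeightFn G w) (hw' : IsWeightFn G' w')
    (v r vs : V) (hvs : G.Adj v vs)
    (hN : G.neighborFinset v = G'.neighborFinset v)
    (hww' : ∀ j ∈ G.neighborFinset v, w v j = w' v j)
    (hM : ∀ i : ℕ, 1 ≤ i → ∀ m, m = v ∨ (m ∈ G.neighborFinset v ∧ m ≠ vs) →
      (stateMatrix w ^ i) m r = (stateMatrix w' ^ i) m r) :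
    ∀ i : ℕ, 1 ≤ i → (stateMatrix w ^ i) vs r = (stateMatrix w' ^ i) vs r := by
  simp only [Finset.ext_iff, SimpleGraph.mem_neighborFinset] at hN hww' hM
  have hrow := hw.apply_eq_of_forall_adj hw' (fun u => (hN u).2) hww'
  exact fun i hi => available_node_entries_determined_general hvs.ne (hw.pos_of_adj hvs).ne'
    (fun u _ => hrow u) (hM (i + 1) (by lia) v (.inl rfl)) fun m hm =>
      hM i hi m (hm.imp_right (And.imp_left hw.adj_of_ne_zero))
end

section
/- Let T be the star graph on n ≥ 4 vertices with center c (the input node). For every sensor set S ⊆ V with |S| ≤ n − 3, the edge weights are not identifiable: there exist two distinct weight functions w ≠ w' for T (both symmetric and positive on the edges of T) such that [𝓛(w)^k]_{s,c} = [𝓛(w')^k]_{s,c} for every s ∈ S and every natural number k. -/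
open Finset

/-!
Transporting a weight function `w` along a graph automorphism `σ` gives a weight function whose
state matrix, together with all its powers, is that of `w` with rows and columns permuted by `σ`.
Hence no entry indexed by fixed points of `σ` can tell the two apart, although they differ as soon
as `w` singles out an edge that `σ` moves. In a star with few sensors at least two leaves carry no
sensor, and swapping them is such an automorphism.
-/

section Transport

variable {V W : Type*}

theorem IsWeightFn.comp_embedding {G : SimpleGraph V} {H : SimpleGraph W} {w : W → W → ℝ}
    (hw : IsWeightFn H w) (φ : G ↪g H) : IsWeightFn G fun u v => w (φ u) (φ v) := by
  obtain ⟨symm, pos, zero, diag⟩ := hw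
  exact ⟨fun _ _ => symm _ _, fun _ _ huv => pos _ _ (φ.map_adj_iff.2 huv),
    fun _ _ hne huv => zero _ _ (φ.injective.ne hne) (mt φ.map_adj_iff.1 huv), fun _ => diag _⟩

variable [Fintype V] [DecidableEq V] [Fintype W] [DecidableEq W]

theorem stateMatrix_comp_equiv (w : W → W → ℝ) (σ : V ≃ W) :
    stateMatrix (fun u v => w (σ u) (σ v)) = (stateMatrix w).submatrix σ σ := by
  ext u v
  simp only [stateMatrix, Matrix.of_apply, Matrix.submatrix_apply, σ.injective.eq_iff]
  split_ifs
  · exact congrArg Neg.neg (Finset.sum_equiv σ (by simp) (by simp))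
  · rfl

theorem stateMatrix_comp_equiv_pow_apply (w : W → W → ℝ) (σ : V ≃ W) (k : ℕ) (u v : V) :
    (stateMatrix (fun u v => w (σ u) (σ v)) ^ k) u v = (stateMatrix w ^ k) (σ u) (σ v) := by
  have h := map_pow (Matrix.reindexAlgEquiv ℝ ℝ σ.symm) (stateMatrix w) k
  simp only [Matrix.coe_reindexAlgEquiv, Matrix.reindex_apply, Equiv.symm_symm] at h
  rw [stateMatrix_comp_equiv, ← h, Matrix.submatrix_apply]

end Transport

section Automorphism

variable {V : Type*} {G : SimpleGraph V}

/-- The weights on `G` that put weight `f e` on each edge `e`; the values of `f` at unordered pairs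
that are not edges are discarded. -/
noncomputable def edgeWeight (G : SimpleGraph V) (f : Sym2 V → ℝ) (u v : V) : ℝ :=
  G.edgeSet.indicator f s(u, v)

theorem edgeWeight_of_adj (f : Sym2 V → ℝ) {u v : V} (huv : G.Adj u v) :
    edgeWeight G f u v = f s(u, v) :=
  Set.indicator_of_mem (G.mem_edgeSet.2 huv) f

theorem edgeWeight_of_not_adj (f : Sym2 V → ℝ) {u v : V} (huv : ¬G.Adj u v) :
    edgeWeight G f u v = 0 :=
  Set.indicator_of_notMem (mt G.mem_edgeSet.1 huv) f

theorem isWeightFn_edgeWeight {f : Sym2 V → ℝ} (hf : ∀ e ∈ G.edgeSet, 0 < f e) :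
    IsWeightFn G (edgeWeight G f) := by
  refine ⟨fun u v => ?_, fun u v huv => ?_, fun u v _ huv => edgeWeight_of_not_adj f huv,
    fun v => edgeWeight_of_not_adj f (G.loopless.irrefl v)⟩
  · rw [edgeWeight, Sym2.eq_swap, edgeWeight]
  · rw [edgeWeight_of_adj f huv]
    exact hf _ huv

theorem exists_isWeightFn_comp_ne (σ : G ≃g G) {x y : V} (hxy : G.Adj x y)
    (hmove : s(σ x, σ y) ≠ s(x, y)) :
    ∃ w : V → V → ℝ, IsWeightFn G w ∧ w ≠ fun u v => w (σ u) (σ v) := by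
  classical
  let f : Sym2 V → ℝ := fun e => if e = s(x, y) then 2 else 1
  have hf : ∀ e ∈ G.edgeSet, 0 < f e := fun e _ => by dsimp only [f]; split_ifs <;> norm_num
  refine ⟨edgeWeight G f, isWeightFn_edgeWeight hf, fun heq => ?_⟩
  have hval : f s(x, y) = f s(σ x, σ y) := by
    simpa only [edgeWeight_of_adj f hxy, edgeWeight_of_adj f (σ.map_adj_iff.2 hxy)]
      using congrFun₂ heq x y
  simp [f, hmove] at hval

theorem not_identifiable_of_automorphism [Fintype V] [DecidableEq V] (σ : G ≃g G) {x y : V}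
    (hxy : G.Adj x y) (hmove : s(σ x, σ y) ≠ s(x, y)) :
    ∃ w w' : V → V → ℝ, IsWeightFn G w ∧ IsWeightFn G w' ∧ w ≠ w' ∧
      ∀ s t, σ s = s → σ t = t → ∀ k : ℕ, (stateMatrix w ^ k) s t = (stateMatrix w' ^ k) s t := by
  obtain ⟨w, hw, hne⟩ := exists_isWeightFn_comp_ne σ hxy hmove
  refine ⟨w, _, hw, hw.comp_embedding σ.toEmbedding, hne, fun s t hs ht k => ?_⟩
  have h := stateMatrix_comp_equiv_pow_apply w σ.toEquiv k s t
  simp only [RelIso.coe_fn_toEquiv, hs, ht] at h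
  exact h.symm

end Automorphism

/-- The automorphism of a star with center `c` given by a permutation of the vertices that
fixes `c`. -/
def starAutomorphism {V : Type*} {G : SimpleGraph V} {c : V}
    (hstar : ∀ a b : V, G.Adj a b ↔ (a = c ∧ b ≠ c) ∨ (b = c ∧ a ≠ c))
    (σ : Equiv.Perm V) (hσ : σ c = c) : G ≃g G where
  toEquiv := σ
  map_rel_iff' {u v} := by
    have hc (x : V) : σ x = c ↔ x = c := by rw [← σ.apply_eq_iff_eq (x := x), hσ]
    simp only [hstar, ne_eq, hc]

theorem star_not_identifiable_with_few_sensors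
    {V : Type*} [Fintype V] [DecidableEq V] (G : SimpleGraph V) (c : V)
    (hstar : ∀ a b : V, G.Adj a b ↔ (a = c ∧ b ≠ c) ∨ (b = c ∧ a ≠ c))
    (hn : 4 ≤ Fintype.card V)
    (S : Finset V) (hS : S.card ≤ Fintype.card V - 3) :
    ∃ w w' : V → V → ℝ, IsWeightFn G w ∧ IsWeightFn G w' ∧ w ≠ w' ∧
      ∀ s ∈ S, ∀ k : ℕ, (stateMatrix w ^ k) s c = (stateMatrix w' ^ k) s c := by
  have hcard : 1 < #(insert c S)ᶜ := by
    have hinsert := card_insert_le c S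
    rw [card_compl]
    omega
  obtain ⟨a, b, ha, hb, hab⟩ := one_lt_card_iff.1 hcard
  rw [mem_compl] at ha hb
  have hfix (s : V) (hs : s ∈ insert c S) : Equiv.swap a b s = s :=
    Equiv.swap_apply_of_ne_of_ne (ne_of_mem_of_not_mem hs ha) (ne_of_mem_of_not_mem hs hb)
  have hcS : c ∈ insert c S := mem_insert_self c S
  have hca : G.Adj c a := (hstar c a).2 (.inl ⟨rfl, (ne_of_mem_of_not_mem hcS ha).symm⟩)
  have hmove : s(Equiv.swap a b c, Equiv.swap a b a) ≠ s(c, a) := by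
    rw [hfix c hcS, Equiv.swap_apply_left]
    exact mt Sym2.congr_right.1 hab.symm
  obtain ⟨w, w', hw, hw', hne, heq⟩ :=
    not_identifiable_of_automorphism (starAutomorphism hstar (Equiv.swap a b) (hfix c hcS))
      hca hmove
  exact ⟨w, w', hw, hw', hne, fun s hs => heq s c (hfix s (mem_insert_of_mem hs)) (hfix c hcS)⟩
end
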